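/- Let S = {(1,1), (−1,1), (1,−1)} ⊂ ℤ². The number of sequences p₀, p₁, …, pₙ of points of ℤ² with p₀ = (0,0), p_k − p_{k−1} ∈ S for all 1 ≤ k ≤ n, the second coordinate of every p_k nonnegative, and the second coordinate of pₙ equal to 0, is 2^m·C(m) if n = 2m is even, and 0 if n is odd, where C(m) denotes the m-th Catalan number. -/

import Mathlib

/-- The step set S = {(1,1), (−1,1), (1,−1)}. -/
def stepsS : Set (ℤ × ℤ) := {(1, 1), (-1, 1), (1, -1)}

/-- A half-plane walk (y ≥ 0) of length `n` with steps from `S` ending on the x-axis. -/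
def IsHalfWalkToAxis (S : Set (ℤ × ℤ)) (n : ℕ) (p : Fin (n + 1) → ℤ × ℤ) : Prop :=
  p 0 = (0, 0) ∧
  (∀ k : Fin n, p k.succ - p k.castSucc ∈ S) ∧
  (∀ k : Fin (n + 1), 0 ≤ (p k).2) ∧
  (p (Fin.last n)).2 = 0

/-- The number of half-plane walks of length `n` with steps `S` ending on the x-axis. -/
noncomputable def numHalfWalks (n : ℕ) : ℕ :=
  Nat.card {p : Fin (n + 1) → ℤ × ℤ // IsHalfWalkToAxis stepsS n p}

/-- Walks of length `n` from `q`, staying in `y ≥ 0`, ending on the x-axis. -/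
def walksFrom (n : ℕ) (q : ℤ × ℤ) : Set (Fin (n + 1) → ℤ × ℤ) :=
  {p | p 0 = q ∧ (∀ k : Fin n, p k.succ - p k.castSucc ∈ stepsS) ∧
    (∀ k : Fin (n + 1), 0 ≤ (p k).2) ∧ (p (Fin.last n)).2 = 0}

/-- The recursive count of walks by starting height. -/
def walkCount : ℕ → ℤ → ℕ
  | 0, h => if h = 0 then 1 else 0
  | n + 1, h => if h < 0 then 0 else 2 * walkCount n (h + 1) + walkCount n (h - 1)

lemma walksFrom_zero_of_eq (q : ℤ × ℤ) (h : q.2 = 0) : walksFrom 0 q = {fun _ => q} := by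
  ext p
  simp only [walksFrom, Set.mem_ofPred_eq, Set.mem_singleton_iff]
  constructor
  · rintro ⟨h0, -⟩
    funext k
    have hk : k = 0 := Fin.ext (by simp)
    rw [hk, h0]
  · rintro rfl
    exact ⟨rfl, fun k => k.elim0, fun _ => h.ge, h⟩

lemma walksFrom_zero_of_ne (q : ℤ × ℤ) (h : q.2 ≠ 0) : walksFrom 0 q = ∅ := by
  ext p
  simp only [walksFrom, Set.mem_ofPred_eq, Set.mem_empty_iff_false, iff_false]
  rintro ⟨h0, -, -, h1⟩
  apply h
  rw [← h0]
  exact h1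

lemma walksFrom_neg (n : ℕ) (q : ℤ × ℤ) (h : q.2 < 0) : walksFrom n q = ∅ := by
  ext p
  simp only [walksFrom, Set.mem_ofPred_eq, Set.mem_empty_iff_false, iff_false]
  rintro ⟨h0, -, h1, -⟩
  have := h1 0
  rw [h0] at this
  omega

/-- Prepend a starting point. -/
def consPt (n : ℕ) (q : ℤ × ℤ) (p : Fin (n + 1) → ℤ × ℤ) : Fin (n + 1 + 1) → ℤ × ℤ :=
  Fin.cons q p

lemma consPt_inj (n : ℕ) (q : ℤ × ℤ) : Function.Injective (consPt n q) := by
  intro a b h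
  exact Fin.cons_right_injective (α := fun _ => ℤ × ℤ) q h

lemma walksFrom_succ (n : ℕ) (q : ℤ × ℤ) (h : 0 ≤ q.2) :
    walksFrom (n + 1) q = consPt n q '' walksFrom n (q + (1, 1)) ∪
      (consPt n q '' walksFrom n (q + (-1, 1)) ∪ consPt n q '' walksFrom n (q + (1, -1))) := by
  have key : ∀ p, p ∈ walksFrom (n + 1) q ↔
      ∃ s ∈ stepsS, p ∈ consPt n q '' walksFrom n (q + s) := by
    intro p
    constructor
    · rintro ⟨h0, hs, hn, hl⟩
      refine ⟨p 1 - q, ?_, Fin.tail p, ⟨?_, ?_, ?_, ?_⟩, ?_⟩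
      · have := hs 0
        simpa [h0] using this
      · simp [Fin.tail]
      · intro k
        exact hs k.succ
      · intro k
        exact hn k.succ
      · exact hl
      · rw [← h0]
        exact Fin.cons_self_tail p
    · rintro ⟨s, hs, r, ⟨h0, hs', hn, hl⟩, rfl⟩
      refine ⟨rfl, ?_, ?_, hl⟩
      · intro k
        refine Fin.cases ?_ (fun j => ?_) k
        · change r 0 - q ∈ stepsS
          rw [h0]
          simpa using hs
        · exact hs' j
      · intro k
        refine Fin.cases ?_ (fun j => ?_) k
        · exact h
        · exact hn j
  ext p
  rw [key]
  simp [stepsS, or_and_right, exists_or]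

lemma walks_disj (n : ℕ) (q s t : ℤ × ℤ) (h : s ≠ t) :
    Disjoint (consPt n q '' walksFrom n (q + s)) (consPt n q '' walksFrom n (q + t)) := by
  rw [Set.disjoint_left]
  rintro p ⟨a, ha, rfl⟩ ⟨b, hb, hab⟩
  have := consPt_inj n q hab
  subst this
  apply h
  have h1 := ha.1
  rw [hb.1] at h1
  exact (add_left_cancel h1).symm

lemma walksFrom_card (n : ℕ) : ∀ q : ℤ × ℤ,
    (walksFrom n q).Finite ∧ (walksFrom n q).ncard = walkCount n q.2 := by
  induction n with
  | zero =>
    intro q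
    by_cases h : q.2 = 0
    · rw [walksFrom_zero_of_eq q h]
      simp [walkCount, h]
    · rw [walksFrom_zero_of_ne q h]
      simp [walkCount, h]
  | succ n ih =>
    intro q
    by_cases h : q.2 < 0
    · rw [walksFrom_neg _ q h]
      simp [walkCount, h]
    · rw [walksFrom_succ n q (by omega)]
      have f1 := (ih (q + (1, 1))).1.image (consPt n q)
      have f2 := (ih (q + (-1, 1))).1.image (consPt n q)
      have f3 := (ih (q + (1, -1))).1.image (consPt n q)
      refine ⟨f1.union (f2.union f3), ?_⟩
      rw [Set.ncard_union_eq _ f1 (f2.union f3), Set.ncard_union_eq _ f2 f3,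
        Set.ncard_image_of_injective _ (consPt_inj n q),
        Set.ncard_image_of_injective _ (consPt_inj n q),
        Set.ncard_image_of_injective _ (consPt_inj n q), (ih _).2, (ih _).2, (ih _).2]
      · simp only [walkCount, if_neg h, Prod.snd_add]
        rw [← sub_eq_add_neg]
        ring
      · exact walks_disj _ _ _ _ (by decide)
      · exact Set.disjoint_union_right.2
          ⟨walks_disj _ _ _ _ (by decide), walks_disj _ _ _ _ (by decide)⟩

lemma walkCount_neg (n : ℕ) (h : ℤ) (hh : h < 0) : walkCount n h = 0 := by
  cases n with
  | zero => simp [walkCount, hh.ne]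
  | succ n => simp [walkCount, hh]

lemma walkCount_big (n : ℕ) : ∀ h : ℤ, (n : ℤ) < h → walkCount n h = 0 := by
  induction n with
  | zero => intro h hh; simp [walkCount]; omega
  | succ n ih =>
    intro h hh
    push_cast at hh
    simp [walkCount, ih (h + 1) (by omega), ih (h - 1) (by omega)]

lemma walkCount_odd (n : ℕ) : ∀ h : ℤ, ((n : ℤ) + h) % 2 = 1 → walkCount n h = 0 := by
  induction n with
  | zero =>
    intro h hh
    have : h ≠ 0 := by
      rintro rfl
      simp at hh
    simp [walkCount, this]
  | succ n ih =>
    intro h hh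
    push_cast at hh
    simp [walkCount, ih (h + 1) (by omega), ih (h - 1) (by omega)]

lemma walkCount_formula (n : ℕ) : ∀ a h : ℕ, n = 2 * a + h →
    walkCount n h + 2 ^ a * n.choose (a + h + 1) = 2 ^ a * n.choose a := by
  induction n with
  | zero =>
    intro a h e
    obtain rfl : a = 0 := by omega
    obtain rfl : h = 0 := by omega
    simp [walkCount]
  | succ n ih =>
    intro a h e
    have hw : walkCount (n + 1) (h : ℤ) = 2 * walkCount n ((h : ℤ) + 1) + walkCount n ((h : ℤ) - 1) := by
      simp [walkCount]
    rw [hw]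
    rcases a with _ | a
    · obtain rfl : h = n + 1 := by omega
      have := ih 0 n (by omega)
      rw [walkCount_big n _ (by push_cast; omega)]
      simp at this ⊢
      exact this
    · have h1 := ih a (h + 1) (by omega)
      push_cast at h1
      have h2 : walkCount n ((h : ℤ) - 1) + 2 ^ (a + 1) * n.choose (a + h + 1)
          = 2 ^ (a + 1) * n.choose (a + 1) := by
        rcases h with _ | h
        · rw [walkCount_neg _ _ (by simp)]
          simp
        · have := ih (a + 1) h (by omega)
          push_cast
          rw [add_sub_cancel_right, ← this]
          congr 3
          omega
      rw [show a + 1 + h + 1 = (a + h + 1) + 1 by ring, Nat.choose_succ_succ', Nat.choose_succ_succ']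
      rw [show a + (h + 1) + 1 = a + h + 1 + 1 by ring] at h1
      rw [pow_succ] at h2 ⊢
      linarith

lemma numHalfWalks_eq (n : ℕ) : numHalfWalks n = walkCount n 0 := by
  have := (walksFrom_card n (0, 0)).2
  rw [← this]
  rfl

theorem stmt_9 :
    (∀ m : ℕ, numHalfWalks (2 * m) = 2 ^ m * catalan m) ∧
    (∀ n : ℕ, Odd n → numHalfWalks n = 0) := by
  constructor
  · intro m
    rw [numHalfWalks_eq]
    have h := walkCount_formula (2 * m) m 0 (by omega)
    have hc := succ_mul_catalan_eq_centralBinom m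
    have hs := Nat.choose_succ_right_eq (2 * m) m
    rw [Nat.centralBinom] at hc
    rw [show 2 * m - m = m by omega] at hs
    simp only [Nat.cast_zero, add_zero] at h
    have e : (2 * m).choose m = catalan m + (2 * m).choose (m + 1) := by
      have : (m + 1) * (2 * m).choose m = (m + 1) * (catalan m + (2 * m).choose (m + 1)) := by
        rw [mul_add, hc]
        linarith
      exact Nat.eq_of_mul_eq_mul_left (Nat.succ_pos m) this
    rw [e, mul_add] at h
    omega
  · intro n hn
    rw [numHalfWalks_eq]
    apply walkCount_odd
    obtain ⟨k, rfl⟩ := hn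
    push_cast
    omega
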